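/- Arc consistency of the R-LINEAR EQUALITY conclusion: consider a single linear equality Σ_{i≤p} a_i x_i - Σ_{i>p} a_i x_i = b over real intervals [l_i, h_i] with all a_i > 0, and let [l'_j, h'_j] be the reduced intervals produced by the R-LINEAR EQUALITY rule (l'_j = max(l_j, γ_j), h'_j = min(h_j, α_j) for j ≤ p; l'_j = max(l_j, β_j), h'_j = min(h_j, δ_j) for j > p). If all reduced intervals are nonempty (l'_i ≤ h'_i for all i), then for every index j and every value d ∈ [l'_j, h'_j] there exists a solution (d_1,...,d_n) of the equation with d_j = d and d_i ∈ [l'_i, h'_i] for all i. -/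

import Mathlib

open Finset

/-!
The reduced interval at `j` is the projection onto the `j`-th axis of the solutions in the box
`[l, h]`. Arc consistency follows at once: every coordinate of such a solution lies in its own
reduced interval.

A linear form maps the box onto the interval between its values at two opposite vertices, because it
maps the segment joining them onto that interval. Applied to the slice `x j = d` of the box, this
says that some solution has `j`-th coordinate `d` if and only if `d ∈ [l j, h j]` and `b` lies
between the extreme values of the form on the slice. Solving these inequalities for `d` yields the
bounds of the R-LINEAR EQUALITY rule.
-/

open Function

variable {ι K : Type*}

theorem Icc_update_update [DecidableEq ι] {π : ι → Type*} [∀ i, PartialOrder (π i)]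
    {l h : ∀ i, π i} {j : ι} {d : π j} (hd : d ∈ Set.Icc (l j) (h j)) :
    Set.Icc (update l j d) (update h j d) = {x ∈ Set.Icc l h | x j = d} := by
  ext x
  simp only [Set.mem_Icc, Set.mem_ofPred_eq, update_le_iff, le_update_iff]
  constructor
  · rintro ⟨⟨hdx, hl⟩, hxd, hh⟩
    obtain rfl := le_antisymm hxd hdx
    refine ⟨⟨fun i ↦ ?_, fun i ↦ ?_⟩, rfl⟩ <;> obtain rfl | hij := eq_or_ne i j
    exacts [hd.1, hl i hij, hd.2, hh i hij]
  · rintro ⟨⟨hl, hh⟩, rfl⟩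
    exact ⟨⟨le_rfl, fun i _ ↦ hl i⟩, le_rfl, fun i _ ↦ hh i⟩

section WeightedSum

variable [DecidableEq ι] [NonUnitalNonAssocSemiring K] {s : Finset ι} {j : ι}

theorem sum_mul_update_of_mem (hj : j ∈ s) (a x : ι → K) (d : K) :
    ∑ i ∈ s, a i * update x j d i = a j * d + ∑ i ∈ s.erase j, a i * x i := by
  rw [← add_sum_erase s _ hj, update_self]
  congr 1
  exact sum_congr rfl fun i hi ↦ by rw [update_of_ne (ne_of_mem_erase hi)]

theorem sum_mul_update_of_notMem (hj : j ∉ s) (a x : ι → K) (d : K) :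
    ∑ i ∈ s, a i * update x j d i = ∑ i ∈ s, a i * x i :=
  sum_congr rfl fun i hi ↦ by rw [update_of_ne (ne_of_mem_of_not_mem hi hj)]

end WeightedSum

section SignedForm

variable {a : ι → K} {pos neg : Finset ι}

/-- The left-hand side `∑ i ∈ pos, a i * x i - ∑ i ∈ neg, a i * x i` of the linear equality, as a
linear form in `x`. -/
def signedForm [CommRing K] (a : ι → K) (pos neg : Finset ι) : (ι → K) →ₗ[K] K :=
  ∑ i ∈ pos, a i • LinearMap.proj i - ∑ i ∈ neg, a i • LinearMap.proj i

theorem signedForm_apply [CommRing K] (a : ι → K) (pos neg : Finset ι) (x : ι → K) :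
    signedForm a pos neg x = ∑ i ∈ pos, a i * x i - ∑ i ∈ neg, a i * x i := by
  simp [signedForm]

theorem signedForm_piecewise [CommRing K] [DecidableEq ι] (hdisj : Disjoint pos neg)
    (x y : ι → K) :
    signedForm a pos neg (pos.piecewise x y) = ∑ i ∈ pos, a i * x i - ∑ i ∈ neg, a i * y i := by
  rw [signedForm_apply]
  congr 1 <;> refine sum_congr rfl fun i hi ↦ ?_
  · rw [piecewise_eq_of_mem _ _ _ hi]
  · rw [piecewise_eq_of_notMem _ _ _ (disjoint_right.1 hdisj hi)]

theorem signedForm_mem_Icc [CommRing K] [PartialOrder K] [IsOrderedRing K] {l h x : ι → K}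
    (ha : 0 ≤ a) (hx : x ∈ Set.Icc l h) :
    signedForm a pos neg x ∈ Set.Icc (∑ i ∈ pos, a i * l i - ∑ i ∈ neg, a i * h i)
      (∑ i ∈ pos, a i * h i - ∑ i ∈ neg, a i * l i) := by
  have hsum_lower (s : Finset ι) : ∑ i ∈ s, a i * l i ≤ ∑ i ∈ s, a i * x i :=
    sum_le_sum fun i _ ↦ mul_le_mul_of_nonneg_left (hx.1 i) (ha i)
  have hsum_upper (s : Finset ι) : ∑ i ∈ s, a i * x i ≤ ∑ i ∈ s, a i * h i :=
    sum_le_sum fun i _ ↦ mul_le_mul_of_nonneg_left (hx.2 i) (ha i)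
  rw [signedForm_apply]
  exact ⟨sub_le_sub (hsum_lower pos) (hsum_upper neg), sub_le_sub (hsum_upper pos) (hsum_lower neg)⟩

theorem image_signedForm_Icc [Field K] [LinearOrder K] [IsStrictOrderedRing K]
    {l h : ι → K} (ha : 0 ≤ a) (hdisj : Disjoint pos neg) (hlh : l ≤ h) :
    signedForm a pos neg '' Set.Icc l h =
      Set.Icc (∑ i ∈ pos, a i * l i - ∑ i ∈ neg, a i * h i)
        (∑ i ∈ pos, a i * h i - ∑ i ∈ neg, a i * l i) := by
  classical
  refine Set.Subset.antisymm (Set.image_subset_iff.2 fun x hx ↦ signedForm_mem_Icc ha hx) ?_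
  have hu : pos.piecewise l h ∈ Set.Icc l h := pos.piecewise_mem_Icc hlh
  have hv : pos.piecewise h l ∈ Set.Icc l h := pos.piecewise_mem_Icc' hlh
  rw [← signedForm_piecewise hdisj, ← signedForm_piecewise hdisj]
  calc Set.Icc (signedForm a pos neg (pos.piecewise l h)) (signedForm a pos neg (pos.piecewise h l))
      ⊆ segment K (signedForm a pos neg (pos.piecewise l h))
          (signedForm a pos neg (pos.piecewise h l)) := Icc_subset_segment
    _ = signedForm a pos neg '' segment K (pos.piecewise l h) (pos.piecewise h l) :=
        (image_segment K (signedForm a pos neg).toAffineMap _ _).symm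
    _ ⊆ signedForm a pos neg '' Set.Icc l h :=
        Set.image_mono ((convex_Icc l h).segment_subset hu hv)

end SignedForm

section Reduction

variable [Field K] [LinearOrder K] [DecidableEq ι]

/-- The lower bound `l'` produced by the R-LINEAR EQUALITY rule: `max (l j) γ_j` at a positive index
and `max (l j) β_j` at a negative one. -/
def reducedLower (a l h : ι → K) (b : K) (pos neg : Finset ι) (j : ι) : K :=
  if j ∈ pos then
    max (l j) ((b - ∑ i ∈ pos.erase j, a i * h i + ∑ i ∈ neg, a i * l i) / a j)
  else
    max (l j) ((-b + ∑ i ∈ pos, a i * l i - ∑ i ∈ neg.erase j, a i * h i) / a j)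

/-- The upper bound `h'` produced by the R-LINEAR EQUALITY rule: `min (h j) α_j` at a positive index
and `min (h j) δ_j` at a negative one. -/
def reducedUpper (a l h : ι → K) (b : K) (pos neg : Finset ι) (j : ι) : K :=
  if j ∈ pos then
    min (h j) ((b - ∑ i ∈ pos.erase j, a i * l i + ∑ i ∈ neg, a i * h i) / a j)
  else
    min (h j) ((-b + ∑ i ∈ pos, a i * h i - ∑ i ∈ neg.erase j, a i * l i) / a j)

variable {a l h : ι → K} {b : K} {pos neg : Finset ι}

theorem le_of_reducedLower_le_reducedUpper
    (hne : ∀ i, reducedLower a l h b pos neg i ≤ reducedUpper a l h b pos neg i) : l ≤ h := by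
  intro i
  have hi := hne i
  unfold reducedLower reducedUpper at hi
  split_ifs at hi <;> exact (le_max_left _ _).trans (hi.trans (min_le_left _ _))

variable [Fintype ι] [IsStrictOrderedRing K]

theorem mem_Icc_reduced_iff {j : ι} {d : K} (ha : 0 < a j) (hc : IsCompl pos neg) :
    d ∈ Set.Icc (reducedLower a l h b pos neg j) (reducedUpper a l h b pos neg j) ↔
      d ∈ Set.Icc (l j) (h j) ∧
        b ∈ Set.Icc (∑ i ∈ pos, a i * update l j d i - ∑ i ∈ neg, a i * update h j d i)
          (∑ i ∈ pos, a i * update h j d i - ∑ i ∈ neg, a i * update l j d i) := by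
  by_cases hpos : j ∈ pos
  · have hneg : j ∉ neg := disjoint_left.1 hc.disjoint hpos
    simp only [reducedLower, reducedUpper, hpos, if_true, Set.mem_Icc, max_le_iff, le_min_iff,
      div_le_iff₀ ha, le_div_iff₀ ha, sum_mul_update_of_mem hpos, sum_mul_update_of_notMem hneg]
    grind
  · have hneg : j ∈ neg := by simpa [hpos] using hc.sup_eq_top.ge (mem_univ j)
    simp only [reducedLower, reducedUpper, hpos, if_false, Set.mem_Icc, max_le_iff, le_min_iff,
      div_le_iff₀ ha, le_div_iff₀ ha, sum_mul_update_of_mem hneg, sum_mul_update_of_notMem hpos]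
    grind

theorem mem_Icc_reduced_iff_exists_solution {j : ι} {d : K} (ha : ∀ i, 0 < a i)
    (hc : IsCompl pos neg) (hlh : l ≤ h) :
    d ∈ Set.Icc (reducedLower a l h b pos neg j) (reducedUpper a l h b pos neg j) ↔
      ∃ x ∈ Set.Icc l h, x j = d ∧ signedForm a pos neg x = b := by
  have hslice : update l j d ≤ update h j d :=
    update_le_update_iff.2 ⟨le_rfl, fun i _ ↦ hlh i⟩
  rw [mem_Icc_reduced_iff (ha j) hc,
    ← image_signedForm_Icc (fun i ↦ (ha i).le) hc.disjoint hslice]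
  constructor
  · rintro ⟨hd, x, hx, hxb⟩
    rw [Icc_update_update hd] at hx
    exact ⟨x, hx.1, hx.2, hxb⟩
  · rintro ⟨x, hx, rfl, hxb⟩
    have hd : x j ∈ Set.Icc (l j) (h j) := ⟨hx.1 j, hx.2 j⟩
    exact ⟨hd, x, Icc_update_update hd ▸ ⟨hx, rfl⟩, hxb⟩

theorem rlinear_equality_arc_consistent_general (ha : ∀ i, 0 < a i) (hc : IsCompl pos neg)
    (hne : ∀ i, reducedLower a l h b pos neg i ≤ reducedUpper a l h b pos neg i)
    (j : ι) (d : K) (hl : reducedLower a l h b pos neg j ≤ d)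
    (hh : d ≤ reducedUpper a l h b pos neg j) :
    ∃ x : ι → K, x j = d ∧
      (∀ i, reducedLower a l h b pos neg i ≤ x i ∧ x i ≤ reducedUpper a l h b pos neg i) ∧
      ∑ i ∈ pos, a i * x i - ∑ i ∈ neg, a i * x i = b := by
  have hlh : l ≤ h := le_of_reducedLower_le_reducedUpper hne
  obtain ⟨x, hx, hxj, hxb⟩ := (mem_Icc_reduced_iff_exists_solution ha hc hlh).1 ⟨hl, hh⟩
  refine ⟨x, hxj, fun i ↦ ?_, signedForm_apply a pos neg x ▸ hxb⟩
  exact (mem_Icc_reduced_iff_exists_solution ha hc hlh).2 ⟨x, hx, rfl, hxb⟩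

end Reduction

theorem rlinear_equality_arc_consistent
    (n p : ℕ) (a l h : Fin n → ℝ) (b : ℝ)
    (ha : ∀ i, 0 < a i)
    (pos neg : Finset (Fin n))
    (hpos : pos = Finset.univ.filter (fun i : Fin n => (i : ℕ) < p))
    (hneg : neg = Finset.univ.filter (fun i : Fin n => ¬ (i : ℕ) < p))
    (l' h' : Fin n → ℝ)
    (hl' : ∀ j, l' j =
      if j ∈ pos then
        max (l j) ((b - ∑ i ∈ pos.erase j, a i * h i + ∑ i ∈ neg, a i * l i) / a j)
      else
        max (l j) ((-b + ∑ i ∈ pos, a i * l i - ∑ i ∈ neg.erase j, a i * h i) / a j))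
    (hh' : ∀ j, h' j =
      if j ∈ pos then
        min (h j) ((b - ∑ i ∈ pos.erase j, a i * l i + ∑ i ∈ neg, a i * h i) / a j)
      else
        min (h j) ((-b + ∑ i ∈ pos, a i * h i - ∑ i ∈ neg.erase j, a i * l i) / a j))
    (hne : ∀ i, l' i ≤ h' i) :
    ∀ j : Fin n, ∀ d : ℝ, l' j ≤ d → d ≤ h' j →
      ∃ sol : Fin n → ℝ, sol j = d ∧ (∀ i, l' i ≤ sol i ∧ sol i ≤ h' i) ∧
        ∑ i ∈ pos, a i * sol i - ∑ i ∈ neg, a i * sol i = b := by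
  obtain ⟨rfl, rfl⟩ : l' = reducedLower a l h b pos neg ∧ h' = reducedUpper a l h b pos neg :=
    ⟨funext hl', funext hh'⟩
  exact rlinear_equality_arc_consistent_general ha
    (by rw [hpos, hneg, ← compl_filter]; exact isCompl_compl) hne
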